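/- arXiv:1007.5494 — 2 statements merged into one kernel-verified Lean document; each statement's English description precedes it below -/
import Mathlib

section
/- Let n ≥ p be positive natural numbers, let Y₁ and Y₂ be real n×p matrices with orthonormal columns (Y₁ᵀY₁ = Iₚ and Y₂ᵀY₂ = Iₚ), and suppose Y₁ᵀY₂ = C where C is a diagonal p×p matrix whose diagonal entries are cos θᵢ with θᵢ ∈ (0, π/2). Let S be the diagonal p×p matrix with entries sin θᵢ and set X = (Y₂ − Y₁C) S⁻¹. For each real t define Y(t) = Y₁·diag(cos(tθᵢ)) + X·diag(sin(tθᵢ)). Then for every real t the matrix Y(t) has orthonormal columns (Y(t)ᵀY(t) = Iₚ), and moreover Y(0) = Y₁ and Y(1) = Y₂. -/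
open Matrix Filter Real

/-!
Put `C = diag(cos θᵢ)` and `S = diag(sin θᵢ)`. Since `Y₁` is an isometry, `W = Y₂ - Y₁ C` is the
part of `Y₂` orthogonal to the columns of `Y₁`, so by Pythagoras its Gram matrix is
`1 - Cᴴ C = Sᴴ S`. Hence `X = W S⁻¹` is again an isometry, with columns orthogonal to those of
`Y₁`, and `Y(t)` is a combination of two orthogonal isometries with coefficients satisfying
`cos² + sin² = 1`.
-/

section OrthogonalResidual

variable {R m p q : Type*} [Ring R] [StarRing R] [Fintype m] [Fintype p]

/-- The component of the columns of `B` orthogonal to the columns of `A`, when `A` has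
orthonormal columns (so that `A * Aᴴ` is the orthogonal projection onto its column space). -/
def orthogonalResidual (A : Matrix m p R) (B : Matrix m q R) : Matrix m q R :=
  B - A * (Aᴴ * B)

theorem conjTranspose_mul_orthogonalResidual [DecidableEq p] {A : Matrix m p R}
    (hA : Aᴴ * A = 1) (B : Matrix m q R) : Aᴴ * orthogonalResidual A B = 0 := by
  rw [orthogonalResidual, Matrix.mul_sub, ← Matrix.mul_assoc, hA, Matrix.one_mul, sub_self]

theorem conjTranspose_mul_self_orthogonalResidual [DecidableEq p] {A : Matrix m p R}
    (hA : Aᴴ * A = 1) (B : Matrix m q R) :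
    (orthogonalResidual A B)ᴴ * orthogonalResidual A B = Bᴴ * B - (Aᴴ * B)ᴴ * (Aᴴ * B) := by
  calc (orthogonalResidual A B)ᴴ * orthogonalResidual A B
      = (B - A * (Aᴴ * B))ᴴ * orthogonalResidual A B := rfl
    _ = Bᴴ * orthogonalResidual A B - (Aᴴ * B)ᴴ * (Aᴴ * orthogonalResidual A B) := by
        rw [conjTranspose_sub, conjTranspose_mul A, Matrix.sub_mul, Matrix.mul_assoc]
    _ = Bᴴ * orthogonalResidual A B := by
        rw [conjTranspose_mul_orthogonalResidual hA, Matrix.mul_zero, sub_zero]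
    _ = Bᴴ * B - (Aᴴ * B)ᴴ * (Aᴴ * B) := by
        rw [orthogonalResidual, Matrix.mul_sub, conjTranspose_mul, conjTranspose_conjTranspose,
          Matrix.mul_assoc]

end OrthogonalResidual

theorem conjTranspose_mul_self_mul_nonsing_inv {R m p : Type*} [CommRing R] [StarRing R]
    [Fintype m] [Fintype p] [DecidableEq p] {W : Matrix m p R} {S : Matrix p p R}
    (hS : IsUnit S) (hW : Wᴴ * W = Sᴴ * S) : (W * S⁻¹)ᴴ * (W * S⁻¹) = 1 := by
  have hSS : S * S⁻¹ = 1 := mul_nonsing_inv S ((isUnit_iff_isUnit_det S).mp hS)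
  calc (W * S⁻¹)ᴴ * (W * S⁻¹)
      = S⁻¹ᴴ * (Wᴴ * W) * S⁻¹ := by simp only [conjTranspose_mul, Matrix.mul_assoc]
    _ = (S * S⁻¹)ᴴ * (S * S⁻¹) := by rw [hW]; simp only [conjTranspose_mul, Matrix.mul_assoc]
    _ = 1 := by rw [hSS, conjTranspose_one, Matrix.one_mul]

theorem conjTranspose_mul_self_combination_eq_one {R m p q k : Type*} [Semiring R] [StarRing R]
    [Fintype m] [Fintype p] [Fintype q] [DecidableEq p] [DecidableEq q] [DecidableEq k]
    {A : Matrix m p R} {B : Matrix m q R} {D : Matrix p k R} {E : Matrix q k R}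
    (hA : Aᴴ * A = 1) (hB : Bᴴ * B = 1) (hAB : Aᴴ * B = 0) (hDE : Dᴴ * D + Eᴴ * E = 1) :
    (A * D + B * E)ᴴ * (A * D + B * E) = 1 := by
  have hBA : Bᴴ * A = 0 := by
    rw [← conjTranspose_conjTranspose A, ← conjTranspose_mul, hAB, conjTranspose_zero]
  calc (A * D + B * E)ᴴ * (A * D + B * E)
      = (Dᴴ * (Aᴴ * A) * D + Eᴴ * (Bᴴ * A) * D) + (Dᴴ * (Aᴴ * B) * E + Eᴴ * (Bᴴ * B) * E) := by
        simp only [conjTranspose_add, conjTranspose_mul, Matrix.add_mul, Matrix.mul_add,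
          Matrix.mul_assoc]
    _ = Dᴴ * D + Eᴴ * E := by
        simp only [hA, hB, hAB, hBA, Matrix.mul_one, Matrix.mul_zero, Matrix.zero_mul, add_zero,
          zero_add]
    _ = 1 := hDE

section Geodesic

variable {𝕜 m p : Type*} [RCLike 𝕜] [Fintype m] [Fintype p] [DecidableEq p]

theorem conjTranspose_mul_self_diagonal_cos_add_diagonal_sin (θ : p → ℝ) :
    (diagonal fun i => (Real.cos (θ i) : 𝕜))ᴴ * (diagonal fun i => (Real.cos (θ i) : 𝕜)) +
      (diagonal fun i => (Real.sin (θ i) : 𝕜))ᴴ * (diagonal fun i => (Real.sin (θ i) : 𝕜)) =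
      1 := by
  have hpyth (x : ℝ) : Real.cos x * Real.cos x + Real.sin x * Real.sin x = 1 := by
    simpa only [sq] using Real.cos_sq_add_sin_sq x
  rw [diagonal_conjTranspose, diagonal_conjTranspose, diagonal_mul_diagonal,
    diagonal_mul_diagonal, diagonal_add, ← diagonal_one]
  congr 1
  funext i
  simp only [Pi.star_apply, RCLike.star_def, RCLike.conj_ofReal]
  exact_mod_cast hpyth (θ i)

theorem isUnit_diagonal_sin {θ : p → ℝ} (hθ : ∀ i, Real.sin (θ i) ≠ 0) :
    IsUnit (diagonal fun i => (Real.sin (θ i) : 𝕜)) :=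
  isUnit_diagonal.mpr <| Pi.isUnit_iff.mpr fun i => (RCLike.ofReal_ne_zero.mpr (hθ i)).isUnit

/-- The matrix `X` of initial directions of the Grassmann geodesic from `Y₁` to `Y₂` with
principal angles `θ`. The inverse is zero, so that `X = 0`, as soon as a single `sin θᵢ`
vanishes. -/
noncomputable def geodesicDirection (Y₁ Y₂ : Matrix m p 𝕜) (θ : p → ℝ) : Matrix m p 𝕜 :=
  orthogonalResidual Y₁ Y₂ * (diagonal fun i => (Real.sin (θ i) : 𝕜))⁻¹

/-- The Grassmann geodesic `Y₁ diag(cos tθᵢ) + X diag(sin tθᵢ)` from `Y₁` to `Y₂` with principal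
angles `θ`, lifted to matrices whose columns span the moving subspace. -/
noncomputable def grassmannGeodesic (Y₁ Y₂ : Matrix m p 𝕜) (θ : p → ℝ) (t : ℝ) :
    Matrix m p 𝕜 :=
  Y₁ * (diagonal fun i => (Real.cos (t * θ i) : 𝕜)) +
    geodesicDirection Y₁ Y₂ θ * diagonal fun i => (Real.sin (t * θ i) : 𝕜)

variable {Y₁ Y₂ : Matrix m p 𝕜} {θ : p → ℝ}

theorem conjTranspose_mul_geodesicDirection (hY₁ : Y₁ᴴ * Y₁ = 1) :
    Y₁ᴴ * geodesicDirection Y₁ Y₂ θ = 0 := by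
  rw [geodesicDirection, ← Matrix.mul_assoc, conjTranspose_mul_orthogonalResidual hY₁,
    Matrix.zero_mul]

theorem conjTranspose_mul_self_geodesicDirection (hY₁ : Y₁ᴴ * Y₁ = 1) (hY₂ : Y₂ᴴ * Y₂ = 1)
    (hθ : ∀ i, Real.sin (θ i) ≠ 0)
    (hY₁Y₂ : Y₁ᴴ * Y₂ = diagonal fun i => (Real.cos (θ i) : 𝕜)) :
    (geodesicDirection Y₁ Y₂ θ)ᴴ * geodesicDirection Y₁ Y₂ θ = 1 := by
  refine conjTranspose_mul_self_mul_nonsing_inv (isUnit_diagonal_sin hθ) ?_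
  rw [conjTranspose_mul_self_orthogonalResidual hY₁, hY₂, hY₁Y₂]
  exact sub_eq_of_eq_add' (conjTranspose_mul_self_diagonal_cos_add_diagonal_sin θ).symm

theorem grassmannGeodesic_zero (Y₁ Y₂ : Matrix m p 𝕜) (θ : p → ℝ) :
    grassmannGeodesic Y₁ Y₂ θ 0 = Y₁ := by
  simp [grassmannGeodesic]

theorem grassmannGeodesic_one (hθ : ∀ i, Real.sin (θ i) ≠ 0)
    (hY₁Y₂ : Y₁ᴴ * Y₂ = diagonal fun i => (Real.cos (θ i) : 𝕜)) :
    grassmannGeodesic Y₁ Y₂ θ 1 = Y₂ := by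
  have hS := (isUnit_iff_isUnit_det _).mp (isUnit_diagonal_sin (𝕜 := 𝕜) hθ)
  simp only [grassmannGeodesic, geodesicDirection, one_mul]
  rw [nonsing_inv_mul_cancel_right _ _ hS, orthogonalResidual, hY₁Y₂, add_sub_cancel]

theorem grassmann_geodesic_stiefel_general (hY₁ : Y₁ᴴ * Y₁ = 1) (hY₂ : Y₂ᴴ * Y₂ = 1)
    (hθ : ∀ i, Real.sin (θ i) ≠ 0)
    (hY₁Y₂ : Y₁ᴴ * Y₂ = diagonal fun i => (Real.cos (θ i) : 𝕜)) :
    (∀ t, (grassmannGeodesic Y₁ Y₂ θ t)ᴴ * grassmannGeodesic Y₁ Y₂ θ t = 1) ∧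
      grassmannGeodesic Y₁ Y₂ θ 0 = Y₁ ∧ grassmannGeodesic Y₁ Y₂ θ 1 = Y₂ :=
  ⟨fun t => conjTranspose_mul_self_combination_eq_one hY₁
      (conjTranspose_mul_self_geodesicDirection hY₁ hY₂ hθ hY₁Y₂)
      (conjTranspose_mul_geodesicDirection hY₁)
      (conjTranspose_mul_self_diagonal_cos_add_diagonal_sin fun i => t * θ i),
    grassmannGeodesic_zero Y₁ Y₂ θ, grassmannGeodesic_one hθ hY₁Y₂⟩

end Geodesic

/-- The Grassmann geodesic `Y(t) = Y₁ diag(cos tθᵢ) + X diag(sin tθᵢ)` between Stiefel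
matrices `Y₁` and `Y₂` with `Y₁ᵀ Y₂ = diag(cos θᵢ)`, `θᵢ ∈ (0, π/2)`, stays in the
Stiefel manifold and has endpoints `Y(0) = Y₁` and `Y(1) = Y₂`. -/
theorem grassmann_geodesic_stiefel {n p : ℕ} (hp : 0 < p) (hpn : p ≤ n)
    (Y₁ Y₂ : Matrix (Fin n) (Fin p) ℝ)
    (hY₁ : Y₁ᵀ * Y₁ = 1) (hY₂ : Y₂ᵀ * Y₂ = 1)
    (θ : Fin p → ℝ) (hθ : ∀ i, θ i ∈ Set.Ioo (0 : ℝ) (Real.pi / 2))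
    (C : Matrix (Fin p) (Fin p) ℝ) (hC : C = Matrix.diagonal fun i => Real.cos (θ i))
    (hY₁Y₂ : Y₁ᵀ * Y₂ = C)
    (S : Matrix (Fin p) (Fin p) ℝ) (hS : S = Matrix.diagonal fun i => Real.sin (θ i))
    (X : Matrix (Fin n) (Fin p) ℝ) (hX : X = (Y₂ - Y₁ * C) * S⁻¹)
    (Y : ℝ → Matrix (Fin n) (Fin p) ℝ)
    (hY : ∀ t : ℝ, Y t = Y₁ * Matrix.diagonal (fun i => Real.cos (t * θ i)) +
      X * Matrix.diagonal fun i => Real.sin (t * θ i)) :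
    (∀ t : ℝ, (Y t)ᵀ * Y t = 1) ∧ Y 0 = Y₁ ∧ Y 1 = Y₂ := by
  have hsin : ∀ i, Real.sin (θ i) ≠ 0 := fun i =>
    (Real.sin_pos_of_pos_of_lt_pi (hθ i).1 (by linarith [(hθ i).2, Real.pi_pos])).ne'
  obtain rfl : Y = grassmannGeodesic Y₁ Y₂ θ := by
    funext t
    rw [hY, hX, ← hY₁Y₂, hS]
    -- Over `ℝ`, `ᴴ` unfolds to `ᵀ` and the coercion to the scalar field to the identity.
    rfl
  exact grassmann_geodesic_stiefel_general hY₁ hY₂ hsin (hY₁Y₂.trans hC)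
end

section
/- Let p be a positive natural number and let M be a real p×p matrix with singular value decomposition M = U·Σ·Vᵀ, where U and V are p×p orthogonal matrices and Σ is diagonal with nonnegative entries. Then for every p×p orthogonal matrix O, trace(O*M) ≤ trace(Σ), and equality is attained for O = V*Uᵀ. Consequently V*Uᵀ maximizes trace(O*M) over the orthogonal group O(p). -/
open Matrix Filter Real

/-!
Cyclicity of the trace gives `tr (O U Σ Vᴴ) = tr (W Σ)` with `W = Vᴴ O U`. If `O` is a contraction
and `U`, `V` have orthonormal columns, then `W` is a contraction, so its diagonal entries have
modulus at most `1` and `|tr (W Σ)| = |∑ Wᵢᵢ σᵢ| ≤ ∑ σᵢ`. The choice `O = V Uᴴ` makes `W = 1`.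
-/

section L2OpNorm

open scoped Matrix.Norms.L2Operator

variable {𝕜 m n r : Type*} [RCLike 𝕜] [Fintype m] [Fintype n] [Fintype r]
  [DecidableEq n] [DecidableEq r]

theorem norm_entry_le_l2_opNorm (A : Matrix m n 𝕜) (i : m) (j : n) : ‖A i j‖ ≤ ‖A‖ := by
  let e : EuclideanSpace 𝕜 n := EuclideanSpace.single j 1
  calc
    ‖A i j‖ = ‖(WithLp.toLp 2 (A *ᵥ e) : EuclideanSpace 𝕜 m) i‖ := by simp [e]
    _ ≤ ‖(WithLp.toLp 2 (A *ᵥ e) : EuclideanSpace 𝕜 m)‖ := PiLp.norm_apply_le _ i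
    _ ≤ ‖A‖ * ‖e‖ := l2_opNorm_mulVec A e
    _ = ‖A‖ := by simp [e]

theorem norm_trace_mul_diagonal_le (W : Matrix n n 𝕜) (d : n → 𝕜) :
    ‖(W * diagonal d).trace‖ ≤ ‖W‖ * ∑ i, ‖d i‖ :=
  calc
    ‖(W * diagonal d).trace‖ = ‖∑ i, W i i * d i‖ := by
      simp only [trace, diag_apply, mul_diagonal]
    _ ≤ ∑ i, ‖W i i‖ * ‖d i‖ := norm_sum_le_of_le _ fun i _ => norm_mul_le (W i i) (d i)
    _ ≤ ∑ i, ‖W‖ * ‖d i‖ := by gcongr; exact norm_entry_le_l2_opNorm W _ _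
    _ = ‖W‖ * ∑ i, ‖d i‖ := (Finset.mul_sum _ _ _).symm

theorem l2_opNorm_le_one_of_conjTranspose_mul_self {A : Matrix m n 𝕜} (hA : Aᴴ * A = 1) :
    ‖A‖ ≤ 1 := by
  have norm_one_le : ‖(1 : Matrix n n 𝕜)‖ ≤ 1 := by
    rw [← diagonal_one, l2_opNorm_diagonal]
    exact (pi_norm_le_iff_of_nonneg zero_le_one).mpr fun _ => norm_one.le
  rwa [← hA, l2_opNorm_conjTranspose_mul_self, ← sq, sq_le_one_iff₀ (norm_nonneg A)]
    at norm_one_le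

theorem l2_opNorm_mul_le_one {A : Matrix m n 𝕜} {B : Matrix n r 𝕜}
    (hA : ‖A‖ ≤ 1) (hB : ‖B‖ ≤ 1) : ‖A * B‖ ≤ 1 :=
  (l2_opNorm_mul A B).trans (mul_le_one₀ hA (norm_nonneg B) hB)

/-- For a thin singular value decomposition `V Uᴴ` is only a partial isometry, so contractions
take the place of the orthogonal matrices. -/
theorem orthogonal_procrustes_general
    (M : Matrix n m 𝕜) (U : Matrix n r 𝕜) (V : Matrix m r 𝕜) (σ : r → ℝ) (hσ : ∀ i, 0 ≤ σ i)
    (hU : Uᴴ * U = 1) (hV : Vᴴ * V = 1)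
    (hM : M = U * diagonal (fun i => (σ i : 𝕜)) * Vᴴ) :
    (∀ O : Matrix m n 𝕜, ‖O‖ ≤ 1 → ‖(O * M).trace‖ ≤ ∑ i, σ i) ∧
      ‖V * Uᴴ‖ ≤ 1 ∧ (V * Uᴴ * M).trace = ∑ i, (σ i : 𝕜) := by
  classical
  have norm_U : ‖U‖ ≤ 1 := l2_opNorm_le_one_of_conjTranspose_mul_self hU
  have norm_V : ‖V‖ ≤ 1 := l2_opNorm_le_one_of_conjTranspose_mul_self hV
  have trace_eq (O : Matrix m n 𝕜) :
      (O * M).trace = (Vᴴ * O * U * diagonal (fun i => (σ i : 𝕜))).trace := by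
    rw [hM, ← Matrix.mul_assoc, trace_mul_comm]
    simp only [Matrix.mul_assoc]
  refine ⟨fun O hO => ?_, ?_, ?_⟩
  · have norm_W : ‖Vᴴ * O * U‖ ≤ 1 :=
      l2_opNorm_mul_le_one
        (l2_opNorm_mul_le_one ((l2_opNorm_conjTranspose V).trans_le norm_V) hO) norm_U
    calc
      ‖(O * M).trace‖ ≤ ‖Vᴴ * O * U‖ * ∑ i, ‖(σ i : 𝕜)‖ :=
        trace_eq O ▸ norm_trace_mul_diagonal_le _ _
      _ ≤ ∑ i, ‖(σ i : 𝕜)‖ :=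
        mul_le_of_le_one_left (Finset.sum_nonneg fun _ _ => norm_nonneg _) norm_W
      _ = ∑ i, σ i := Finset.sum_congr rfl fun i _ => RCLike.norm_of_nonneg (hσ i)
  · exact l2_opNorm_mul_le_one norm_V ((l2_opNorm_conjTranspose U).trans_le norm_U)
  · rw [trace_eq, ← Matrix.mul_assoc, hV, Matrix.one_mul, hU, Matrix.one_mul, trace_diagonal]

end L2OpNorm

/-- Orthogonal Procrustes: if `M = U Σ Vᵀ` is a singular value decomposition of `M`
(`U, V` orthogonal and `Σ = diag(σ)` with `σ ≥ 0`), then `trace (O * M) ≤ trace Σ` for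
every orthogonal `O`, with equality attained at `O = V Uᵀ`; hence `V Uᵀ` maximizes
`trace (O * M)` over the orthogonal group. -/
theorem orthogonal_procrustes {p : ℕ} (hp : 0 < p)
    (M U V : Matrix (Fin p) (Fin p) ℝ) (σ : Fin p → ℝ) (hσ : ∀ i, 0 ≤ σ i)
    (hU : Uᵀ * U = 1) (hV : Vᵀ * V = 1)
    (hM : M = U * Matrix.diagonal σ * Vᵀ) :
    (∀ O : Matrix (Fin p) (Fin p) ℝ, Oᵀ * O = 1 →
      (O * M).trace ≤ (Matrix.diagonal σ).trace) ∧
    (V * Uᵀ * M).trace = (Matrix.diagonal σ).trace := by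
  obtain ⟨bound, -, attained⟩ := orthogonal_procrustes_general M U V σ hσ hU hV hM
  simp only [trace_diagonal]
  exact ⟨fun O hO => (le_abs_self _).trans
    (bound O (l2_opNorm_le_one_of_conjTranspose_mul_self hO)), attained⟩
end
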